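/- Let Ω ⊂ ℂ² be a bounded pseudoconvex Hartogs domain with smooth boundary. If K ⊂ bΩ is compact and ∂δ̃/∂z ≠ 0 at every point of K, then there exist a neighborhood V of K and a smooth defining function ρ for Ω on V whose complex Hessian is positive semidefinite at every point of bΩ ∩ V. -/

import Mathlib

open Complex Metric Set Real Topology Filter

noncomputable section
open scoped Classical

/-- The signed distance function to the boundary of `Ω`: negative inside, positive outside. -/
def sdist (Ω : Set (ℂ × ℂ)) (p : ℂ × ℂ) : ℝ :=
  if p ∈ Ω then -Metric.infDist p (frontier Ω) else Metric.infDist p (frontier Ω)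

/-- Complexification of a real-valued function on `ℂ²`. -/
def cf (f : ℂ × ℂ → ℝ) : ℂ × ℂ → ℂ := fun p => (f p : ℂ)

/-- Wirtinger derivative `∂/∂z` (first coordinate). -/
def wdz (f : ℂ × ℂ → ℂ) (p : ℂ × ℂ) : ℂ :=
  (fderiv ℝ f p (1, 0) - Complex.I * fderiv ℝ f p (Complex.I, 0)) / 2

/-- Wirtinger derivative `∂/∂z̄` (first coordinate). -/
def wdzbar (f : ℂ × ℂ → ℂ) (p : ℂ × ℂ) : ℂ :=
  (fderiv ℝ f p (1, 0) + Complex.I * fderiv ℝ f p (Complex.I, 0)) / 2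

/-- Wirtinger derivative `∂/∂w` (second coordinate). -/
def wdw (f : ℂ × ℂ → ℂ) (p : ℂ × ℂ) : ℂ :=
  (fderiv ℝ f p (0, 1) - Complex.I * fderiv ℝ f p (0, Complex.I)) / 2

/-- Wirtinger derivative `∂/∂w̄` (second coordinate). -/
def wdwbar (f : ℂ × ℂ → ℂ) (p : ℂ × ℂ) : ℂ :=
  (fderiv ℝ f p (0, 1) + Complex.I * fderiv ℝ f p (0, Complex.I)) / 2

/-- The complex Hessian quadratic form of a real-valued function `f` at `p`
in the direction `(ξ, η)`. -/
def cHess (f : ℂ × ℂ → ℝ) (p : ℂ × ℂ) (ξ η : ℂ) : ℝ :=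
  (wdz (wdzbar (cf f)) p * ξ * (starRingEnd ℂ) ξ
    + wdz (wdwbar (cf f)) p * ξ * (starRingEnd ℂ) η
    + wdw (wdzbar (cf f)) p * η * (starRingEnd ℂ) ξ
    + wdw (wdwbar (cf f)) p * η * (starRingEnd ℂ) η).re

/-- A (C²) function is plurisubharmonic on a set if its complex Hessian is positive
semidefinite at every point of the set. -/
def PshOn (f : ℂ × ℂ → ℝ) (S : Set (ℂ × ℂ)) : Prop :=
  ∀ p ∈ S, ∀ ξ η : ℂ, 0 ≤ cHess f p ξ η

/-- `Ω ⊆ ℂ²` is a Hartogs domain if it is invariant under rotations in the first variable. -/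
def IsHartogs (Ω : Set (ℂ × ℂ)) : Prop :=
  ∀ z w : ℂ, ∀ θ : ℝ, (z, w) ∈ Ω → (Complex.exp (θ * Complex.I) * z, w) ∈ Ω

/-- A global smooth defining function for `Ω`. -/
def IsDefiningFunction (Ω : Set (ℂ × ℂ)) (ρ : ℂ × ℂ → ℝ) : Prop :=
  ContDiff ℝ (⊤ : ℕ∞) ρ ∧ (∀ p, p ∈ Ω ↔ ρ p < 0) ∧ ∀ p ∈ frontier Ω, fderiv ℝ ρ p ≠ 0

/-- `Ω` has smooth boundary if it admits a global smooth defining function. -/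
def HasSmoothBoundary (Ω : Set (ℂ × ℂ)) : Prop :=
  ∃ ρ, IsDefiningFunction Ω ρ

/-- `(ξ, η)` is a complex tangent vector to `bΩ` at `p` (with respect to the signed
distance function). -/
def IsComplexTangent (Ω : Set (ℂ × ℂ)) (p : ℂ × ℂ) (ξ η : ℂ) : Prop :=
  ξ * wdz (cf (sdist Ω)) p + η * wdw (cf (sdist Ω)) p = 0

/-- Levi pseudoconvexity of `Ω`, expressed via the signed distance function. -/
def IsPseudoconvex (Ω : Set (ℂ × ℂ)) : Prop :=
  ∀ p ∈ frontier Ω, ∀ ξ η : ℂ, IsComplexTangent Ω p ξ η → 0 ≤ cHess (sdist Ω) p ξ η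

/-- Strict pseudoconvexity at a boundary point. -/
def StrictlyPseudoconvexAt (Ω : Set (ℂ × ℂ)) (p : ℂ × ℂ) : Prop :=
  ∀ ξ η : ℂ, (ξ, η) ≠ (0, 0) → IsComplexTangent Ω p ξ η → 0 < cHess (sdist Ω) p ξ η

/-- The set of weakly pseudoconvex boundary points. -/
def weakPoints (Ω : Set (ℂ × ℂ)) : Set (ℂ × ℂ) :=
  {p ∈ frontier Ω | ¬ StrictlyPseudoconvexAt Ω p}

/-- `τ` is a Diederich–Fornæss exponent for `Ω`. -/
def IsDFExponent (Ω : Set (ℂ × ℂ)) (τ : ℝ) : Prop :=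
  0 < τ ∧ τ < 1 ∧ ∃ ρ, IsDefiningFunction Ω ρ ∧
    PshOn (fun p => -(-ρ p) ^ τ) Ω

/-- The Diederich–Fornæss index of `Ω`. -/
def DFIndex (Ω : Set (ℂ × ℂ)) : ℝ := sSup {τ | IsDFExponent Ω τ}

/-- A pseudoconvex open set: one admitting a smooth plurisubharmonic exhaustion function. -/
def IsPseudoconvexOpen (D : Set (ℂ × ℂ)) : Prop :=
  IsOpen D ∧ ∃ φ : ℂ × ℂ → ℝ, ContDiffOn ℝ (⊤ : ℕ∞) φ D ∧ PshOn φ D ∧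
    ∀ c : ℝ, IsCompact {p ∈ D | φ p ≤ c}

/-- `closure Ω` admits a Stein neighborhood basis. -/
def AdmitsSteinBasis (Ω : Set (ℂ × ℂ)) : Prop :=
  ∀ U : Set (ℂ × ℂ), IsOpen U → closure Ω ⊆ U →
    ∃ D : Set (ℂ × ℂ), IsPseudoconvexOpen D ∧ closure Ω ⊆ D ∧ D ⊆ U

/-! Let `E = r ∂/∂r` be the radial field of the first variable. A defining function which depends
only on `|z|` and `w` and is transversal to `E` can be corrected to second order to a defining
function `ρ` for which `E ρ - (± 1)` vanishes to second order on `bΩ`. By rotation invariance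
`E ρ = 2 z̄ ρ_z̄`, so `ρ_zz̄` and `ρ_wz̄` vanish on `bΩ` and the complex Hessian of `ρ` is
`ρ_ww̄ |η|²`. The Levi form of `ρ` is `ρ_ww̄ |ρ_z|²`, hence `ρ_ww̄ ≥ 0` by pseudoconvexity.

Pseudoconvexity is expressed through `δ̃`, which is taken with respect to the maximum metric of
`ℂ × ℂ`; it is known to be smooth only near boundary points where both `ρ_z` and `ρ_w` are nonzero.
At the other points either `ρ_ww̄ ≥ 0` follows by a limit along `bΩ`, or `ρ_w` vanishes on `bΩ` near
the point and so does `ρ_ww̄`. -/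

open scoped ContDiff

section FirstOrder

variable {E : Type*} [NormedAddCommGroup E] [NormedSpace ℝ E] {p : E}

theorem eventually_differentiableAt {F : Type*} [NormedAddCommGroup F] [NormedSpace ℝ F]
    {f : E → F} (hf : ContDiffAt ℝ 1 f p) : ∀ᶠ x in 𝓝 p, DifferentiableAt ℝ f x :=
  (hf.eventually (by simp)).mono fun _ hx => hx.differentiableAt one_ne_zero

theorem eventually_add_smul_neg_of_fderiv_neg {f : E → ℝ} {v : E} (hf : DifferentiableAt ℝ f p)
    (h0 : f p = 0) (hv : fderiv ℝ f p v < 0) : ∀ᶠ t : ℝ in 𝓝[>] 0, f (p + t • v) < 0 := by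
  have hline : HasDerivAt (fun t : ℝ => f (p + t • v)) (fderiv ℝ f p v) 0 :=
    hf.hasFDerivAt.hasLineDerivAt v
  filter_upwards [hline.tendsto_slope_zero_right.eventually (gt_mem_nhds hv), self_mem_nhdsWithin]
    with t hslope (ht : 0 < t)
  simp only [zero_add, zero_smul, add_zero, h0, sub_zero, smul_eq_mul] at hslope
  exact neg_of_mul_neg_right hslope (inv_pos.2 ht).le

theorem fderiv_nonpos_of_fderiv_neg {f r : E → ℝ} (hf : DifferentiableAt ℝ f p)
    (hr : DifferentiableAt ℝ r p) (hf0 : f p = 0) (hr0 : r p = 0)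
    (hle : ∀ᶠ x in 𝓝 p, r x < 0 → f x ≤ 0) {v : E} (hv : fderiv ℝ r p v < 0) :
    fderiv ℝ f p v ≤ 0 := by
  by_contra! hpos
  have hneg : fderiv ℝ (-f) p v < 0 := by simpa [fderiv_neg] using hpos
  have hline : Tendsto (fun t : ℝ => p + t • v) (𝓝[>] 0) (𝓝 p) := by
    have : Continuous fun t : ℝ => p + t • v := by fun_prop
    simpa using (this.tendsto 0).mono_left nhdsWithin_le_nhds
  obtain ⟨t, hft, hrt, hlet⟩ := ((eventually_add_smul_neg_of_fderiv_neg hf.neg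
    (by simp [hf0]) hneg).and ((eventually_add_smul_neg_of_fderiv_neg hr hr0 hv).and
    (hline.eventually hle))).exists
  have := hlet hrt
  simp only [Pi.neg_apply] at hft
  linarith

theorem exists_nonneg_fderiv_eq_smul {f r : E → ℝ} (hf : DifferentiableAt ℝ f p)
    (hr : DifferentiableAt ℝ r p) (hf0 : f p = 0) (hr0 : r p = 0) (hdr : fderiv ℝ r p ≠ 0)
    (hle : ∀ᶠ x in 𝓝 p, r x < 0 → f x ≤ 0) :
    ∃ μ : ℝ, 0 ≤ μ ∧ fderiv ℝ f p = μ • fderiv ℝ r p := by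
  obtain ⟨w, hw⟩ : ∃ w, fderiv ℝ r p w = -1 := by
    obtain ⟨u, hu⟩ := DFunLike.ne_iff.1 hdr
    rw [zero_apply] at hu
    exact ⟨-(fderiv ℝ r p u)⁻¹ • u, by simp [hu]⟩
  have hnonpos {v : E} (hv : fderiv ℝ r p v < 0) : fderiv ℝ f p v ≤ 0 :=
    fderiv_nonpos_of_fderiv_neg hf hr hf0 hr0 hle hv
  have hupper (v : E) : fderiv ℝ f p v + fderiv ℝ r p v * fderiv ℝ f p w ≤ 0 := by
    have happrox : ∀ ε > 0, fderiv ℝ f p v + (fderiv ℝ r p v + ε) * fderiv ℝ f p w ≤ 0 := by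
      intro ε hε
      have := hnonpos (v := v + (fderiv ℝ r p v + ε) • w) (by simp [hw, hε])
      simpa using this
    have hlim : Tendsto (fun ε => fderiv ℝ f p v + (fderiv ℝ r p v + ε) * fderiv ℝ f p w) (𝓝[>] 0)
        (𝓝 (fderiv ℝ f p v + fderiv ℝ r p v * fderiv ℝ f p w)) := by
      refine Tendsto.mono_left ?_ nhdsWithin_le_nhds
      exact Continuous.tendsto' (by fun_prop) _ _ (by simp)
    exact le_of_tendsto hlim (eventually_nhdsWithin_of_forall happrox)
  refine ⟨-fderiv ℝ f p w, neg_nonneg.2 (hnonpos (by simp [hw])), ?_⟩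
  ext v
  have hv := hupper v
  have hneg := hupper (-v)
  simp only [map_neg] at hneg
  simp only [smul_apply, smul_eq_mul]
  linarith

variable [CompleteSpace E]

theorem exists_eq_smul_of_eq_on_levelSet {φ g : E → ℝ} {φ' g' : E →L[ℝ] ℝ}
    (hφ : HasStrictFDerivAt φ φ' p) (hg : HasStrictFDerivAt g g' p) (hg' : g' ≠ 0)
    (heq : ∀ᶠ x in 𝓝 p, g x = g p → φ x = φ p) : ∃ c : ℝ, φ' = c • g' := by
  have hextr : IsLocalExtrOn φ {x | g x = g p} p :=
    .inl (eventually_nhdsWithin_iff.2 (heq.mono fun x hx hgx => (hx hgx).ge))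
  obtain ⟨a, b, hab, hlin⟩ := hextr.exists_multipliers_of_hasStrictFDerivAt_1d hg hφ
  have hb : b ≠ 0 := by
    rintro rfl
    have ha : a ≠ 0 := fun ha => hab (by rw [ha, Prod.mk_zero_zero])
    exact hg' (by simpa [ha] using hlin)
  refine ⟨-(a / b), ?_⟩
  ext v
  have hv : a * g' v + b * φ' v = 0 := congr($hlin v)
  simp only [smul_apply, smul_eq_mul]
  field_simp
  linarith

theorem exists_fderiv_eq_smul_of_eq_zero_on_levelSet {F : E → ℂ} {g : E → ℝ}
    (hF : ContDiffAt ℝ 1 F p) (hg : ContDiffAt ℝ 1 g p) (hdg : fderiv ℝ g p ≠ 0)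
    (hzero : ∀ᶠ x in 𝓝 p, g x = g p → F x = 0) :
    ∃ c : ℂ, fderiv ℝ F p = c • fderiv ℝ (fun x => (g x : ℂ)) p := by
  have hF' := hF.hasStrictFDerivAt one_ne_zero
  have hg' := hg.hasStrictFDerivAt one_ne_zero
  have hFp : F p = 0 := hzero.self_of_nhds rfl
  obtain ⟨a, ha⟩ := exists_eq_smul_of_eq_on_levelSet
    (reCLM.hasStrictFDerivAt.comp p hF') hg' hdg (hzero.mono fun x hx h => by simp [hx h, hFp])
  obtain ⟨b, hb⟩ := exists_eq_smul_of_eq_on_levelSet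
    (imCLM.hasStrictFDerivAt.comp p hF') hg' hdg (hzero.mono fun x hx h => by simp [hx h, hFp])
  have hcoe : fderiv ℝ (fun x => (g x : ℂ)) p = ofRealCLM ∘L fderiv ℝ g p :=
    (ofRealCLM.hasFDerivAt.comp p hg'.hasFDerivAt).fderiv
  refine ⟨⟨a, b⟩, ?_⟩
  ext v
  have hre : (fderiv ℝ F p v).re = a * fderiv ℝ g p v := congr($ha v)
  have him : (fderiv ℝ F p v).im = b * fderiv ℝ g p v := congr($hb v)
  apply Complex.ext <;> simp [hcoe, hre, him]

end FirstOrder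

section Collar

variable {E : Type*} [NormedAddCommGroup E] [NormedSpace ℝ E] [FiniteDimensional ℝ E]

theorem exists_continuousLinearEquiv_add_smul (L : E →L[ℝ] ℝ) {N : E} (hLN : L N ≠ 0) :
    ∃ A : (E × ℝ) ≃L[ℝ] (E × ℝ), ∀ v t, A (v, t) = (v + t • N, L v) := by
  let T : E × ℝ →ₗ[ℝ] E × ℝ :=
    (LinearMap.fst ℝ E ℝ + (LinearMap.snd ℝ E ℝ).smulRight N).prod (L ∘ₗ LinearMap.fst ℝ E ℝ)
  have hT : Function.Injective T := by
    refine (injective_iff_map_eq_zero T).2 fun ⟨v, t⟩ h => ?_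
    obtain ⟨hv, hLv⟩ : v + t • N = 0 ∧ L v = 0 := Prod.mk_eq_zero.1 h
    have ht : t = 0 := by simpa [hLv, hLN] using congr(L $hv)
    simpa [ht] using hv
  exact ⟨(LinearEquiv.ofInjectiveEndo T hT).toContinuousLinearEquiv, fun v t => rfl⟩

/- `(q, t) ↦ (q + t • N q, r q)` is a local diffeomorphism at `(p, 0)`, and its inverse maps
`(x, 0)` to `(Q x, τ x)`. -/
theorem contDiffAt_of_eq_add_smul {r : E → ℝ} {N Q : E → E} {τ : E → ℝ} {p : E}
    (hr : ContDiffAt ℝ ∞ r p) (hN : ContDiffAt ℝ ∞ N p) (hr0 : r p = 0)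
    (hrN : fderiv ℝ r p (N p) ≠ 0) (hQ : Tendsto Q (𝓝 p) (𝓝 p)) (hτ : Tendsto τ (𝓝 p) (𝓝 0))
    (hrQ : ∀ᶠ x in 𝓝 p, r (Q x) = 0) (hsplit : ∀ᶠ x in 𝓝 p, x = Q x + τ x • N (Q x)) :
    ContDiffAt ℝ ∞ τ p := by
  let G : E × ℝ → E × ℝ := fun x => (x.1 + x.2 • N x.1, r x.1)
  have hG0 : G (p, 0) = (p, 0) := by simp [G, hr0]
  have hrG : ContDiffAt ℝ ∞ (fun x : E × ℝ => r x.1) (p, 0) := hr.fst'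
  have hNG : ContDiffAt ℝ ∞ (fun x : E × ℝ => N x.1) (p, 0) := hN.fst'
  have hG : ContDiffAt ℝ ∞ G (p, 0) := (contDiffAt_fst.add (contDiffAt_snd.smul hNG)).prodMk hrG
  obtain ⟨A, hA⟩ := exists_continuousLinearEquiv_add_smul (fderiv ℝ r p) hrN
  have hGA : HasFDerivAt G (A : E × ℝ →L[ℝ] E × ℝ) (p, 0) := by
    have hder := (hasFDerivAt_fst.add (hasFDerivAt_snd.smul
      (hNG.differentiableAt (by simp)).hasFDerivAt)).prodMk
      (HasFDerivAt.comp (g := r) (p, (0 : ℝ)) (hr.differentiableAt (by simp)).hasFDerivAt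
        hasFDerivAt_fst)
    refine hder.congr_fderiv (ContinuousLinearMap.ext fun ⟨v, t⟩ => ?_)
    simp [hA]
  have hstrict := hG.hasStrictFDerivAt' hGA (by simp)
  have hinv : ContDiffAt ℝ ∞ (hstrict.localInverse G A (p, 0)) (G (p, 0)) :=
    hG.to_localInverse hGA (by simp)
  rw [hG0] at hinv
  have hτeq : τ =ᶠ[𝓝 p] fun x => (hstrict.localInverse G A (p, 0) (x, 0)).2 := by
    filter_upwards [hrQ, hsplit, (hQ.prodMk_nhds hτ).eventually hstrict.eventually_left_inverse]
      with x hrx hx hleft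
    have hGx : G (Q x, τ x) = (x, 0) := Prod.ext hx.symm hrx
    rw [← hGx, hleft]
  refine ContDiffAt.congr_of_eventuallyEq ?_ hτeq
  exact (hinv.comp p (contDiffAt_id.prodMk contDiffAt_const)).snd

end Collar

section Normalization

variable {E : Type*} [NormedAddCommGroup E] [NormedSpace ℝ E] {X : E → E} {f R : E → ℝ} {p : E}

/-- The derivative `X f` of a real function `f` along a vector field `X`. -/
def derivAlong (X : E → E) (f : E → ℝ) (p : E) : ℝ := fderiv ℝ f p (X p)

theorem hasDerivAt_derivAlong (X : E → E) (hf : DifferentiableAt ℝ f p) :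
    HasDerivAt (fun t : ℝ => f (p + t • X p)) (derivAlong X f p) 0 :=
  hf.hasFDerivAt.hasLineDerivAt (X p)

theorem contDiffAt_derivAlong (hX : ContDiff ℝ ∞ X) (hf : ContDiffAt ℝ ∞ f p) :
    ContDiffAt ℝ ∞ (derivAlong X f) p :=
  (hf.fderiv_right (by simp)).clm_apply hX.contDiffAt

/-- Given a vector field `X`, the function `R / |X R| * (1 + R * X (X R) / (2 * (X R) ^ 2))`: a
positive multiple of `R` near its zeros, corrected to second order so that its derivative along `X`
is `±1` up to `O(R ^ 2)`. -/
def normalizeAlong (X : E → E) (R : E → ℝ) (p : E) : ℝ :=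
  R p / |derivAlong X R p| *
    (1 + R p * derivAlong X (derivAlong X R) p / (2 * derivAlong X R p ^ 2))

/-- The part of `U` on which the second order factor of `normalizeAlong X R` is positive, so that
`normalizeAlong X R` has the sign of `R`. -/
def normalizationDomain (X : E → E) (R : E → ℝ) (U : Set E) : Set E :=
  {p ∈ U | 0 < 1 + R p * derivAlong X (derivAlong X R) p / (2 * derivAlong X R p ^ 2)}

theorem contDiffAt_normalizeAlong (hX : ContDiff ℝ ∞ X) (hR : ContDiffAt ℝ ∞ R p)
    (hXR : derivAlong X R p ≠ 0) : ContDiffAt ℝ ∞ (normalizeAlong X R) p := by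
  have h1 := contDiffAt_derivAlong hX hR
  have h2 := contDiffAt_derivAlong hX h1
  exact (hR.div (h1.abs hXR) (abs_ne_zero.2 hXR)).mul (contDiffAt_const.add
    ((hR.mul h2).div (contDiffAt_const.mul (h1.pow 2)) (by positivity)))

theorem normalizeAlong_neg_iff (hXR : derivAlong X R p ≠ 0)
    (hpos : 0 < 1 + R p * derivAlong X (derivAlong X R) p / (2 * derivAlong X R p ^ 2)) :
    normalizeAlong X R p < 0 ↔ R p < 0 := by
  have habs := abs_pos.2 hXR
  rw [normalizeAlong, ← not_le, ← not_le, mul_nonneg_iff_of_pos_right hpos,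
    le_div_iff₀ habs, zero_mul]

theorem derivAlong_normalizeAlong (hX : ContDiff ℝ ∞ X) (hR : ContDiffAt ℝ ∞ R p)
    (hXR : derivAlong X R p ≠ 0) :
    derivAlong X (normalizeAlong X R) p = SignType.sign (derivAlong X R p) * (1 + R p ^ 2 *
      (derivAlong X (derivAlong X (derivAlong X R)) p / (2 * derivAlong X R p ^ 3) -
        3 * derivAlong X (derivAlong X R) p ^ 2 / (2 * derivAlong X R p ^ 4))) := by
  have h1 := contDiffAt_derivAlong hX hR
  have h2 := contDiffAt_derivAlong hX h1
  have hline {f : E → ℝ} (hf : ContDiffAt ℝ ∞ f p) :=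
    hasDerivAt_derivAlong X (hf.differentiableAt (by simp))
  have habs := (hasDerivAt_abs hXR).comp_of_eq 0 (hline h1) (by simp)
  have hρ := ((hline hR).fun_div habs (by simpa using hXR)).mul
    (((hline hR).fun_mul (hline h2)).fun_div (((hline h1).fun_pow 2).const_mul 2)
      (by simpa using hXR) |>.const_add 1)
  rw [(hline (contDiffAt_normalizeAlong hX hR hXR)).unique hρ]
  simp only [zero_smul, add_zero, Function.comp_apply]
  generalize derivAlong X (derivAlong X (derivAlong X R)) p = C at *
  generalize derivAlong X (derivAlong X R) p = B at *
  generalize derivAlong X R p = A at *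
  rcases hXR.lt_or_gt with hA | hA
  · simp only [abs_of_neg hA, sign_neg hA, SignType.coe_neg_one, Nat.cast_ofNat]
    field_simp
    ring
  · simp only [abs_of_pos hA, sign_pos hA, SignType.coe_one, Nat.cast_ofNat]
    field_simp
    ring

theorem derivAlong_normalizeAlong_ne_zero (hX : ContDiff ℝ ∞ X) (hR : ContDiffAt ℝ ∞ R p)
    (hXR : derivAlong X R p ≠ 0) (h0 : R p = 0) : derivAlong X (normalizeAlong X R) p ≠ 0 := by
  rcases hXR.lt_or_gt with h | h <;> simp [derivAlong_normalizeAlong hX hR hXR, h0, h]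

theorem fderiv_derivAlong_normalizeAlong_eq_zero (hX : ContDiff ℝ ∞ X)
    (hR : ∀ᶠ x in 𝓝 p, ContDiffAt ℝ ∞ R x) (hXR : derivAlong X R p ≠ 0) (h0 : R p = 0) :
    fderiv ℝ (derivAlong X (normalizeAlong X R)) p = 0 := by
  have hRp := hR.self_of_nhds
  have h1 := contDiffAt_derivAlong hX hRp
  have h2 := contDiffAt_derivAlong hX h1
  have h3 := contDiffAt_derivAlong hX h2
  set G : E → ℝ := fun x =>
    derivAlong X (derivAlong X (derivAlong X R)) x / (2 * derivAlong X R x ^ 3) -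
      3 * derivAlong X (derivAlong X R) x ^ 2 / (2 * derivAlong X R x ^ 4)
  have hGdiff : DifferentiableAt ℝ G p :=
    ((h3.div (contDiffAt_const.mul (h1.pow 3)) (by positivity)).sub
      ((contDiffAt_const.mul (h2.pow 2)).div (contDiffAt_const.mul (h1.pow 4))
        (by positivity))).differentiableAt (by simp)
  have hsign : ∀ᶠ x in 𝓝 p, SignType.sign (derivAlong X R x) = SignType.sign (derivAlong X R p) :=
    ((continuousAt_sign_of_ne_zero hXR).comp h1.continuousAt).eventually_mem
      (isOpen_discrete {SignType.sign (derivAlong X R p)} |>.mem_nhds rfl)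
  have hexp : derivAlong X (normalizeAlong X R) =ᶠ[𝓝 p]
      fun x => SignType.sign (derivAlong X R p) * (1 + R x ^ 2 * G x) := by
    filter_upwards [hR, h1.continuousAt.eventually_ne hXR, hsign] with x hRx hne hs
    rw [derivAlong_normalizeAlong hX hRx hne, hs]
  have hRdiff := (hRp.differentiableAt (by simp)).hasFDerivAt
  have hder := ((hRdiff.pow 2).mul hGdiff.hasFDerivAt).const_add 1 |>.const_mul
    (SignType.sign (derivAlong X R p) : ℝ)
  rw [hexp.fderiv_eq]
  refine hder.fderiv.trans ?_
  simp [h0]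

end Normalization

section Wirtinger

variable {f g : ℂ × ℂ → ℝ} {F G : ℂ × ℂ → ℂ} {p : ℂ × ℂ}

theorem cf_contDiffAt {n : WithTop ℕ∞} (hf : ContDiffAt ℝ n f p) : ContDiffAt ℝ n (cf f) p :=
  ofRealCLM.contDiff.contDiffAt.comp p hf

theorem fderiv_cf (hf : DifferentiableAt ℝ f p) : fderiv ℝ (cf f) p = ofRealCLM ∘L fderiv ℝ f p :=
  (ofRealCLM.hasFDerivAt.comp p hf.hasFDerivAt).fderiv

theorem fderiv_cf_apply (hf : DifferentiableAt ℝ f p) (v : ℂ × ℂ) :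
    fderiv ℝ (cf f) p v = fderiv ℝ f p v := by
  simp [fderiv_cf hf]

theorem differentiableAt_of_wdz_cf_ne_zero (h : wdz (cf f) p ≠ 0) : DifferentiableAt ℝ f p := by
  by_contra hf
  have hcf : ¬ DifferentiableAt ℝ (cf f) p := fun hcf => hf (reCLM.differentiableAt.comp p hcf)
  simp [wdz, fderiv_zero_of_not_differentiableAt hcf] at h

theorem wdzbar_cf_eq_conj (hf : DifferentiableAt ℝ f p) :
    wdzbar (cf f) p = (starRingEnd ℂ) (wdz (cf f) p) := by
  simp [wdz, wdzbar, fderiv_cf_apply hf, map_ofNat]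

theorem wdwbar_cf_eq_conj (hf : DifferentiableAt ℝ f p) :
    wdwbar (cf f) p = (starRingEnd ℂ) (wdw (cf f) p) := by
  simp [wdw, wdwbar, fderiv_cf_apply hf, map_ofNat]

theorem fderiv_apply_eq_two_mul_re (hf : DifferentiableAt ℝ f p) (v : ℂ × ℂ) :
    fderiv ℝ f p v = 2 * (wdz (cf f) p * v.1 + wdw (cf f) p * v.2).re := by
  have hv : v = v.1.re • (1, 0) + v.1.im • (I, 0) + (v.2.re • (0, 1) + v.2.im • (0, I)) := by
    ext <;> simp
  conv_lhs => rw [hv]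
  simp only [map_add, map_smul, smul_eq_mul, wdz, wdw, fderiv_cf_apply hf, add_re, mul_re, mul_im,
    div_re, div_im, sub_re, sub_im, I_re, I_im, ofReal_re, ofReal_im, normSq_ofNat, re_ofNat,
    im_ofNat]
  ring

theorem contDiffAt_fderiv_apply (hF : ContDiffAt ℝ ∞ F p) (v : ℂ × ℂ) :
    ContDiffAt ℝ ∞ (fun x => fderiv ℝ F x v) p :=
  (hF.fderiv_right (by simp)).clm_apply contDiffAt_const

theorem wdz_contDiffAt (hF : ContDiffAt ℝ ∞ F p) : ContDiffAt ℝ ∞ (wdz F) p :=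
  ((contDiffAt_fderiv_apply hF _).sub
    (contDiffAt_const.mul (contDiffAt_fderiv_apply hF _))).div_const 2

theorem wdw_contDiffAt (hF : ContDiffAt ℝ ∞ F p) : ContDiffAt ℝ ∞ (wdw F) p :=
  ((contDiffAt_fderiv_apply hF _).sub
    (contDiffAt_const.mul (contDiffAt_fderiv_apply hF _))).div_const 2

theorem wdzbar_contDiffAt (hF : ContDiffAt ℝ ∞ F p) : ContDiffAt ℝ ∞ (wdzbar F) p :=
  ((contDiffAt_fderiv_apply hF _).add
    (contDiffAt_const.mul (contDiffAt_fderiv_apply hF _))).div_const 2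

theorem wdwbar_contDiffAt (hF : ContDiffAt ℝ ∞ F p) : ContDiffAt ℝ ∞ (wdwbar F) p :=
  ((contDiffAt_fderiv_apply hF _).add
    (contDiffAt_const.mul (contDiffAt_fderiv_apply hF _))).div_const 2

section Proportional

variable {c : ℂ} (h : fderiv ℝ F p = c • fderiv ℝ G p)

include h

theorem wdz_eq_mul_of_fderiv_eq_smul : wdz F p = c * wdz G p := by
  simp only [wdz, h, smul_apply, smul_eq_mul]
  ring

theorem wdw_eq_mul_of_fderiv_eq_smul : wdw F p = c * wdw G p := by
  simp only [wdw, h, smul_apply, smul_eq_mul]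
  ring

theorem wdzbar_eq_mul_of_fderiv_eq_smul : wdzbar F p = c * wdzbar G p := by
  simp only [wdzbar, h, smul_apply, smul_eq_mul]
  ring

theorem wdwbar_eq_mul_of_fderiv_eq_smul : wdwbar F p = c * wdwbar G p := by
  simp only [wdwbar, h, smul_apply, smul_eq_mul]
  ring

end Proportional

theorem fderiv_cf_eq_smul {κ : ℝ} (hf : DifferentiableAt ℝ f p) (hg : DifferentiableAt ℝ g p)
    (h : fderiv ℝ f p = κ • fderiv ℝ g p) :
    fderiv ℝ (cf f) p = (κ : ℂ) • fderiv ℝ (cf g) p := by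
  refine ContinuousLinearMap.ext fun v => ?_
  simp [fderiv_cf hf, fderiv_cf hg, h]

theorem wdz_mul (hF : DifferentiableAt ℝ F p) (hG : DifferentiableAt ℝ G p) :
    wdz (F * G) p = F p * wdz G p + G p * wdz F p := by
  simp only [wdz, fderiv_mul hF hG, add_apply, smul_apply, smul_eq_mul]
  ring

theorem wdw_mul (hF : DifferentiableAt ℝ F p) (hG : DifferentiableAt ℝ G p) :
    wdw (F * G) p = F p * wdw G p + G p * wdw F p := by
  simp only [wdw, fderiv_mul hF hG, add_apply, smul_apply, smul_eq_mul]
  ring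

theorem wdz_sub (hF : DifferentiableAt ℝ F p) (hG : DifferentiableAt ℝ G p) :
    wdz (F - G) p = wdz F p - wdz G p := by
  simp only [wdz, fderiv_sub hF hG, sub_apply]
  ring

theorem wdw_sub (hF : DifferentiableAt ℝ F p) (hG : DifferentiableAt ℝ G p) :
    wdw (F - G) p = wdw F p - wdw G p := by
  simp only [wdw, fderiv_sub hF hG, sub_apply]
  ring

theorem fderiv_fderiv_cf_apply (hf : ContDiffAt ℝ 2 f p) (u v : ℂ × ℂ) :
    fderiv ℝ (fun x => fderiv ℝ (cf f) x u) p v = fderiv ℝ (fderiv ℝ f) p v u := by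
  have hreal : (fun x => fderiv ℝ (cf f) x u) =ᶠ[𝓝 p] cf fun x => fderiv ℝ f x u := by
    filter_upwards [hf.eventually (by simp)] with x hx
    exact fderiv_cf_apply (hx.differentiableAt two_ne_zero) u
  have hdiff : DifferentiableAt ℝ (fderiv ℝ f) p :=
    (hf.fderiv_right (m := 1) le_rfl).differentiableAt one_ne_zero
  rw [hreal.fderiv_eq, fderiv_cf_apply (hdiff.clm_apply (differentiableAt_const u)),
    fderiv_clm_apply hdiff (differentiableAt_const u)]
  simp

theorem wdz_wdwbar_eq_conj_wdw_wdzbar (hf : ContDiffAt ℝ 2 f p) :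
    wdz (wdwbar (cf f)) p = (starRingEnd ℂ) (wdw (wdzbar (cf f)) p) := by
  have hdiff (u : ℂ × ℂ) : DifferentiableAt ℝ (fun x => fderiv ℝ (cf f) x u) p :=
    ((cf_contDiffAt hf).fderiv_right (m := 1) le_rfl).differentiableAt one_ne_zero
      |>.clm_apply (differentiableAt_const u)
  have hbar (u u' v : ℂ × ℂ) :
      fderiv ℝ (fun x => (fderiv ℝ (cf f) x u + I * fderiv ℝ (cf f) x u') / 2) p v =
        (fderiv ℝ (fderiv ℝ f) p v u + I * fderiv ℝ (fderiv ℝ f) p v u') / 2 := by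
    rw [← fderiv_fderiv_cf_apply hf, ← fderiv_fderiv_cf_apply hf]
    simp only [div_eq_mul_inv]
    rw [fderiv_mul_const ((hdiff u).fun_add ((hdiff u').const_mul I)),
      fderiv_fun_add (hdiff u) ((hdiff u').const_mul I), fderiv_const_mul (hdiff u')]
    simp only [smul_apply, add_apply, smul_eq_mul]
    ring
  have hsymm : IsSymmSndFDerivAt ℝ f p := hf.isSymmSndFDerivAt (by simp)
  unfold wdz wdw wdzbar wdwbar
  simp only [hbar, hsymm.eq (1, 0), hsymm.eq (I, 0), map_div₀, map_sub, map_add, map_mul, conj_I,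
    conj_ofReal, map_ofNat]
  ring

end Wirtinger

/-- `ρ` is a smooth defining function for `Ω` on the open set `V`; the global notion
`IsDefiningFunction` is the case `V = univ`. -/
structure IsDefiningFunctionOn (Ω : Set (ℂ × ℂ)) (ρ : ℂ × ℂ → ℝ) (V : Set (ℂ × ℂ)) : Prop where
  isOpen : IsOpen V
  contDiffOn : ContDiffOn ℝ ∞ ρ V
  mem_iff : ∀ p ∈ V, p ∈ Ω ↔ ρ p < 0
  fderiv_ne_zero : ∀ p ∈ frontier Ω ∩ V, fderiv ℝ ρ p ≠ 0

theorem IsDefiningFunction.isDefiningFunctionOn_univ {Ω : Set (ℂ × ℂ)} {r : ℂ × ℂ → ℝ}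
    (hr : IsDefiningFunction Ω r) : IsDefiningFunctionOn Ω r univ where
  isOpen := isOpen_univ
  contDiffOn := hr.1.contDiffOn
  mem_iff p _ := hr.2.1 p
  fderiv_ne_zero p hp := hr.2.2 p hp.1

namespace IsDefiningFunctionOn

variable {Ω V : Set (ℂ × ℂ)} {ρ : ℂ × ℂ → ℝ} {p : ℂ × ℂ} (hρ : IsDefiningFunctionOn Ω ρ V)

include hρ

theorem contDiffAt (hp : p ∈ V) : ContDiffAt ℝ ∞ ρ p :=
  hρ.contDiffOn.contDiffAt (hρ.isOpen.mem_nhds hp)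

theorem differentiableAt (hp : p ∈ V) : DifferentiableAt ℝ ρ p :=
  (hρ.contDiffAt hp).differentiableAt (by simp)

theorem eventually_mem (hp : p ∈ V) : ∀ᶠ x in 𝓝 p, x ∈ V :=
  hρ.isOpen.mem_nhds hp

theorem nonpos_of_mem_closure (hcl : p ∈ closure Ω) (hp : p ∈ V) : ρ p ≤ 0 := by
  by_contra! hpos
  obtain ⟨x, hxΩ, hxV, hx⟩ := ((mem_closure_iff_frequently.1 hcl).and_eventually
    ((hρ.eventually_mem hp).and
      ((hρ.contDiffAt hp).continuousAt.eventually_const_lt hpos))).exists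
  exact ((hρ.mem_iff x hxV).1 hxΩ).not_gt hx

theorem nonneg_of_mem_closure_compl (hcl : p ∈ closure Ωᶜ) (hp : p ∈ V) : 0 ≤ ρ p := by
  by_contra! hneg
  obtain ⟨x, hxΩ, hxV, hx⟩ := ((mem_closure_iff_frequently.1 hcl).and_eventually
    ((hρ.eventually_mem hp).and
      ((hρ.contDiffAt hp).continuousAt.eventually_lt_const hneg))).exists
  exact hxΩ ((hρ.mem_iff x hxV).2 hx)

theorem eq_zero_of_mem_frontier (hpΩ : p ∈ frontier Ω) (hp : p ∈ V) : ρ p = 0 := by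
  rw [frontier_eq_closure_inter_closure] at hpΩ
  exact (hρ.nonpos_of_mem_closure hpΩ.1 hp).antisymm (hρ.nonneg_of_mem_closure_compl hpΩ.2 hp)

theorem mem_frontier (hp : p ∈ V) (h0 : ρ p = 0) (hd : fderiv ℝ ρ p ≠ 0) : p ∈ frontier Ω := by
  refine ⟨?_, fun hint => ?_⟩
  · by_contra hcl
    refine hd (IsLocalMin.fderiv_eq_zero ?_)
    filter_upwards [isClosed_closure.isOpen_compl.mem_nhds hcl, hρ.eventually_mem hp] with x hx hxV
    rw [h0]
    exact not_lt.1 fun hneg => hx (subset_closure ((hρ.mem_iff x hxV).2 hneg))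
  · exact ((hρ.mem_iff p hp).1 (interior_subset hint)).ne h0

theorem eventually_mem_frontier (hpΩ : p ∈ frontier Ω) (hp : p ∈ V) :
    ∀ᶠ x in 𝓝 p, ρ x = 0 → x ∈ frontier Ω := by
  have hcont : ContinuousAt (fderiv ℝ ρ) p :=
    ((hρ.contDiffAt hp).fderiv_right (m := 0) (by simp)).continuousAt
  filter_upwards [hρ.eventually_mem hp, hcont.eventually_ne (hρ.fderiv_ne_zero p ⟨hpΩ, hp⟩)]
    with x hxV hdx h0
  exact hρ.mem_frontier hxV h0 hdx

end IsDefiningFunctionOn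

section LeviForm

variable {f g : ℂ × ℂ → ℝ} {p : ℂ × ℂ}

theorem cHess_tangent_eq_re (hg : DifferentiableAt ℝ g p) :
    cHess f p (wdw (cf g) p) (-wdz (cf g) p) =
      ((wdw (cf g) p * wdz (wdzbar (cf f)) p - wdz (cf g) p * wdw (wdzbar (cf f)) p) *
          wdwbar (cf g) p -
        (wdw (cf g) p * wdz (wdwbar (cf f)) p - wdz (cf g) p * wdw (wdwbar (cf f)) p) *
          wdzbar (cf g) p).re := by
  rw [cHess, wdzbar_cf_eq_conj hg, wdwbar_cf_eq_conj hg, map_neg]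
  ring_nf

theorem wdw_mul_wdz_eq_wdz_mul_wdw_of_eq_zero_on_levelSet {F : ℂ × ℂ → ℂ}
    (hF : ContDiffAt ℝ 1 F p) (hg : ContDiffAt ℝ 1 g p) (hdg : fderiv ℝ g p ≠ 0)
    (hzero : ∀ᶠ x in 𝓝 p, g x = g p → F x = 0) :
    wdw (cf g) p * wdz F p = wdz (cf g) p * wdw F p := by
  obtain ⟨c, hc⟩ := exists_fderiv_eq_smul_of_eq_zero_on_levelSet hF hg hdg hzero
  rw [wdz_eq_mul_of_fderiv_eq_smul (G := cf g) hc, wdw_eq_mul_of_fderiv_eq_smul (G := cf g) hc]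
  ring

/- The function `f_z̄ g_w̄ - f_w̄ g_z̄` vanishes wherever `df` is proportional to `dg`, so the
tangential derivative `g_w ∂_z - g_z ∂_w` annihilates it; the product rule then gives the claim. -/
theorem cHess_tangent_eq_mul {κ : ℝ} (hf : ContDiffAt ℝ ∞ f p) (hg : ContDiffAt ℝ ∞ g p)
    (hdg : fderiv ℝ g p ≠ 0) (hp : fderiv ℝ f p = κ • fderiv ℝ g p)
    (hprop : ∀ᶠ x in 𝓝 p, g x = g p → ∃ κ' : ℝ, fderiv ℝ f x = κ' • fderiv ℝ g x) :
    cHess f p (wdw (cf g) p) (-wdz (cf g) p) =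
      κ * cHess g p (wdw (cf g) p) (-wdz (cf g) p) := by
  have hfz := wdzbar_contDiffAt (cf_contDiffAt hf)
  have hfw := wdwbar_contDiffAt (cf_contDiffAt hf)
  have hgz := wdzbar_contDiffAt (cf_contDiffAt hg)
  have hgw := wdwbar_contDiffAt (cf_contDiffAt hg)
  have hd {H : ℂ × ℂ → ℂ} (hH : ContDiffAt ℝ ∞ H p) := hH.differentiableAt (by simp)
  have hfd : ∀ᶠ x in 𝓝 p, DifferentiableAt ℝ f x := eventually_differentiableAt (hf.of_le (by simp))
  have hgd : ∀ᶠ x in 𝓝 p, DifferentiableAt ℝ g x := eventually_differentiableAt (hg.of_le (by simp))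
  have hvanish : ∀ᶠ x in 𝓝 p, g x = g p →
      (wdzbar (cf f) * wdwbar (cf g) - wdwbar (cf f) * wdzbar (cf g)) x = 0 := by
    filter_upwards [hprop, hfd, hgd] with x hx hfx hgx hgxp
    obtain ⟨κ', hκ'⟩ := hx hgxp
    have hs := fderiv_cf_eq_smul hfx hgx hκ'
    simp only [Pi.sub_apply, Pi.mul_apply, wdzbar_eq_mul_of_fderiv_eq_smul hs,
      wdwbar_eq_mul_of_fderiv_eq_smul hs]
    ring
  have htangent := wdw_mul_wdz_eq_wdz_mul_wdw_of_eq_zero_on_levelSet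
    (F := wdzbar (cf f) * wdwbar (cf g) - wdwbar (cf f) * wdzbar (cf g))
    (((hfz.mul hgw).sub (hfw.mul hgz)).of_le (by simp)) (hg.of_le (by simp)) hdg hvanish
  rw [wdz_sub ((hd hfz).mul (hd hgw)) ((hd hfw).mul (hd hgz)), wdz_mul (hd hfz) (hd hgw),
    wdz_mul (hd hfw) (hd hgz), wdw_sub ((hd hfz).mul (hd hgw)) ((hd hfw).mul (hd hgz)),
    wdw_mul (hd hfz) (hd hgw), wdw_mul (hd hfw) (hd hgz)] at htangent
  have hs := fderiv_cf_eq_smul hfd.self_of_nhds hgd.self_of_nhds hp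
  rw [wdzbar_eq_mul_of_fderiv_eq_smul hs, wdwbar_eq_mul_of_fderiv_eq_smul hs] at htangent
  rw [cHess_tangent_eq_re hgd.self_of_nhds, cHess_tangent_eq_re hgd.self_of_nhds, ← re_ofReal_mul]
  congr 1
  linear_combination htangent

end LeviForm

section NearestPoint

theorem exists_tendsto_infDist_eq_dist {X : Type*} [MetricSpace X] [ProperSpace X] {S : Set X}
    (hS : IsClosed S) {p : X} (hp : p ∈ S) :
    ∃ Q : X → X, Tendsto Q (𝓝 p) (𝓝 p) ∧ ∀ x, Q x ∈ S ∧ infDist x S = dist x (Q x) := by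
  choose Q hQS hQdist using hS.exists_infDist_eq_dist ⟨p, hp⟩
  refine ⟨Q, ?_, fun x => ⟨hQS x, hQdist x⟩⟩
  have hbound (x : X) : dist (Q x) p ≤ dist x p + dist x p :=
    calc dist (Q x) p ≤ dist x (Q x) + dist x p := dist_triangle_left _ _ _
      _ ≤ dist x p + dist x p := by gcongr; exact hQdist x ▸ infDist_le_dist_of_mem hp
  refine tendsto_iff_dist_tendsto_zero.2 (squeeze_zero (fun _ => dist_nonneg) hbound ?_)
  exact Continuous.tendsto' (by fun_prop) _ _ (by simp)

variable {E : Type*} [NormedAddCommGroup E] [NormedSpace ℝ E]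

theorem ball_infDist_frontier_subset {S : Set E} {x : E} (hx : x ∈ S) :
    ball x (infDist x (frontier S)) ⊆ S := by
  have hcover : ball x (infDist x (frontier S)) ⊆ interior S ∪ interior Sᶜ :=
    ball_infDist_subset_compl.trans compl_frontier_eq_union_interior.subset
  rcases (ball x (infDist x (frontier S))).eq_empty_or_nonempty with hempty | hne
  · exact hempty ▸ empty_subset S
  have hxball := mem_ball_self (x := x) (nonempty_ball.1 hne)
  have hxint : x ∈ interior S := (hcover hxball).resolve_right fun h => interior_subset h hx
  exact ((convex_ball x _).isPreconnected.subset_left_of_subset_union isOpen_interior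
    isOpen_interior (disjoint_compl_right.mono interior_subset interior_subset) hcover
    ⟨x, hxball, hxint⟩).trans interior_subset

theorem closedBall_infDist_frontier_subset_closure {S : Set E} {x : E} (hx : x ∈ S) :
    closedBall x (infDist x (frontier S)) ⊆ closure S := by
  rcases eq_or_ne (infDist x (frontier S)) 0 with h0 | hne
  · simpa [h0] using subset_closure hx
  · rw [← closure_ball x hne]
    exact closure_mono (ball_infDist_frontier_subset hx)

theorem fderiv_le_fderiv_sub_of_isLocalMaxOn_closedBall {f : E → ℝ} {x q v : E} {t : ℝ}
    (hf : DifferentiableAt ℝ f q) (hmax : IsLocalMaxOn f (closedBall x t) q)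
    (hq : q ∈ closedBall x t) (hv : ‖v‖ ≤ t) : fderiv ℝ f q v ≤ fderiv ℝ f q (q - x) := by
  have hxv : x + v ∈ closedBall x t := by simpa using hv
  have hle := hmax.hasFDerivWithinAt_nonpos hf.hasFDerivAt.hasFDerivWithinAt
    (sub_mem_posTangentConeAt_of_segment_subset ((convex_closedBall x t).segment_subset hq hxv))
  rw [show x + v - q = v - (q - x) by abel, map_sub] at hle
  linarith

end NearestPoint

section SupNormal

variable {ρ : ℂ × ℂ → ℝ} {q : ℂ × ℂ}

/-- The vector `(|ρ_z| / ρ_z, |ρ_w| / ρ_w)`. Since `ℂ × ℂ` carries the supremum norm, this is the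
unit vector maximising `dρ`, and it plays the role of the outward unit normal to the level sets of
`ρ`. -/
def supNormal (ρ : ℂ × ℂ → ℝ) (q : ℂ × ℂ) : ℂ × ℂ :=
  (‖wdz (cf ρ) q‖ / wdz (cf ρ) q, ‖wdw (cf ρ) q‖ / wdw (cf ρ) q)

theorem norm_supNormal_le_one : ‖supNormal ρ q‖ ≤ 1 := by
  simp [supNormal, Prod.norm_def, div_self_le_one]

theorem mul_norm_div_self (a : ℂ) : a * (‖a‖ / a) = ‖a‖ :=
  mul_div_cancel_of_imp' fun h => by simp [h]

theorem fderiv_supNormal (hρ : DifferentiableAt ℝ ρ q) :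
    fderiv ℝ ρ q (supNormal ρ q) = 2 * (‖wdz (cf ρ) q‖ + ‖wdw (cf ρ) q‖) := by
  simp [fderiv_apply_eq_two_mul_re hρ, supNormal, mul_norm_div_self]

theorem contDiffAt_supNormal (hρ : ContDiffAt ℝ ∞ ρ q) (hz : wdz (cf ρ) q ≠ 0)
    (hw : wdw (cf ρ) q ≠ 0) : ContDiffAt ℝ ∞ (supNormal ρ) q := by
  have hcoord {a : ℂ × ℂ → ℂ} (ha : ContDiffAt ℝ ∞ a q) (h0 : a q ≠ 0) :
      ContDiffAt ℝ ∞ (fun x => (‖a x‖ : ℂ) / a x) q := by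
    simp only [div_eq_mul_inv]
    exact (ofRealCLM.contDiff.contDiffAt.comp q (ha.norm ℝ h0)).mul (ha.inv h0)
  exact (hcoord (wdz_contDiffAt (cf_contDiffAt hρ)) hz).prodMk
    (hcoord (wdw_contDiffAt (cf_contDiffAt hρ)) hw)

theorem eq_smul_norm_div_of_le_re {a d : ℂ} {t : ℝ} (ha : a ≠ 0) (hd : ‖d‖ ≤ t)
    (h : t * ‖a‖ ≤ (a * d).re) : d = t • ((‖a‖ : ℂ) / a) := by
  have hle : ‖a * d‖ ≤ t * ‖a‖ := by
    rw [norm_mul, mul_comm]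
    gcongr
  have hre := re_le_norm (a * d)
  have had : a * d = ‖a * d‖ := eq_coe_norm_of_nonneg (re_eq_norm.1 (by linarith))
  rw [show ‖a * d‖ = t * ‖a‖ by linarith] at had
  rw [eq_div_of_mul_eq ha ((mul_comm d a).trans had), real_smul, mul_div_assoc', ofReal_mul]

theorem eq_smul_supNormal_of_le_fderiv (hρ : DifferentiableAt ℝ ρ q) (hz : wdz (cf ρ) q ≠ 0)
    (hw : wdw (cf ρ) q ≠ 0) {d : ℂ × ℂ} {t : ℝ} (hd : ‖d‖ ≤ t)
    (h : fderiv ℝ ρ q (t • supNormal ρ q) ≤ fderiv ℝ ρ q d) : d = t • supNormal ρ q := by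
  have hbound (a d : ℂ) (hd : ‖d‖ ≤ t) : (a * d).re ≤ t * ‖a‖ := by
    refine (re_le_norm _).trans ?_
    rw [norm_mul, mul_comm]
    gcongr
  have hz_le := hbound (wdz (cf ρ) q) d.1 ((norm_fst_le d).trans hd)
  have hw_le := hbound (wdw (cf ρ) q) d.2 ((norm_snd_le d).trans hd)
  rw [map_smul, fderiv_supNormal hρ, fderiv_apply_eq_two_mul_re hρ, add_re, smul_eq_mul] at h
  exact Prod.ext (eq_smul_norm_div_of_le_re hz ((norm_fst_le d).trans hd) (by linarith))
    (eq_smul_norm_div_of_le_re hw ((norm_snd_le d).trans hd) (by linarith))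

end SupNormal

section SignedDistance

variable {Ω V : Set (ℂ × ℂ)} {ρ : ℂ × ℂ → ℝ} {p : ℂ × ℂ}

theorem abs_sdist (p : ℂ × ℂ) : |sdist Ω p| = infDist p (frontier Ω) := by
  unfold sdist
  split_ifs <;> simp [abs_of_nonneg infDist_nonneg]

theorem sdist_eq_zero_of_mem_frontier (hp : p ∈ frontier Ω) : sdist Ω p = 0 := by
  rw [← abs_eq_zero, abs_sdist, infDist_zero_of_mem hp]

theorem sdist_nonpos_of_mem (hp : p ∈ Ω) : sdist Ω p ≤ 0 := by
  simp [sdist, hp, infDist_nonneg]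

theorem tendsto_sdist_of_mem_frontier (hp : p ∈ frontier Ω) : Tendsto (sdist Ω) (𝓝 p) (𝓝 0) := by
  rw [tendsto_zero_iff_abs_tendsto_zero]
  simp only [Function.comp_def, abs_sdist]
  exact (continuous_infDist_pt _).tendsto' _ _ (infDist_zero_of_mem hp)

theorem IsDefiningFunctionOn.eq_add_sdist_smul_supNormal (hρ : IsDefiningFunctionOn Ω ρ V)
    {x q : ℂ × ℂ} (hqΩ : q ∈ frontier Ω) (hqV : q ∈ V)
    (hxq : infDist x (frontier Ω) = dist x q) (hz : wdz (cf ρ) q ≠ 0) (hw : wdw (cf ρ) q ≠ 0) :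
    x = q + sdist Ω x • supNormal ρ q := by
  have hd := hρ.differentiableAt hqV
  have h0 := hρ.eq_zero_of_mem_frontier hqΩ hqV
  set t := infDist x (frontier Ω) with ht
  have ht0 : 0 ≤ t := infDist_nonneg
  have hqball : q ∈ closedBall x t := by rw [mem_closedBall', hxq]
  have hN : ‖t • supNormal ρ q‖ ≤ t := by
    rw [norm_smul, Real.norm_of_nonneg ht0]
    exact mul_le_of_le_one_right ht0 norm_supNormal_le_one
  have hnear : ∀ᶠ y in 𝓝[closedBall x t] q, y ∈ V ∧ y ∈ closedBall x t :=
    ((hρ.eventually_mem hqV).filter_mono nhdsWithin_le_nhds).and self_mem_nhdsWithin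
  by_cases hx : x ∈ Ω
  · have hmax : IsLocalMaxOn ρ (closedBall x t) q := by
      filter_upwards [hnear] with y hy
      rw [h0]
      exact hρ.nonpos_of_mem_closure (closedBall_infDist_frontier_subset_closure hx hy.2) hy.1
    have heq := eq_smul_supNormal_of_le_fderiv hd hz hw (by rw [hxq, dist_eq_norm_sub'])
      (fderiv_le_fderiv_sub_of_isLocalMaxOn_closedBall hd hmax hqball hN)
    rw [sdist, if_pos hx, neg_smul, ← heq]
    abel
  · have hmin : IsLocalMaxOn (-ρ) (closedBall x t) q := by
      filter_upwards [hnear] with y hy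
      rw [ht, ← frontier_compl] at hy
      simpa [h0] using hρ.nonneg_of_mem_closure_compl
        (closedBall_infDist_frontier_subset_closure hx hy.2) hy.1
    have hle := fderiv_le_fderiv_sub_of_isLocalMaxOn_closedBall hd.neg hmin hqball
      ((norm_neg _).trans_le hN)
    have heq := eq_smul_supNormal_of_le_fderiv hd hz hw (d := x - q) (t := t)
      (by rw [hxq, dist_eq_norm]) (by
        simpa only [fderiv_neg, neg_apply, map_neg, neg_neg, ← map_neg, neg_sub] using hle)
    rw [sdist, if_neg hx, ← heq]
    abel

theorem IsDefiningFunctionOn.contDiffAt_sdist (hρ : IsDefiningFunctionOn Ω ρ V)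
    (hpΩ : p ∈ frontier Ω) (hp : p ∈ V) (hz : wdz (cf ρ) p ≠ 0) (hw : wdw (cf ρ) p ≠ 0) :
    ContDiffAt ℝ ∞ (sdist Ω) p := by
  have hρp := hρ.contDiffAt hp
  obtain ⟨Q, hQ, hQx⟩ := exists_tendsto_infDist_eq_dist isClosed_frontier hpΩ
  have hnormal : fderiv ℝ ρ p (supNormal ρ p) ≠ 0 := by
    rw [fderiv_supNormal (hρ.differentiableAt hp)]
    positivity
  have hne : ∀ᶠ x in 𝓝 p, x ∈ V ∧ wdz (cf ρ) x ≠ 0 ∧ wdw (cf ρ) x ≠ 0 :=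
    (hρ.eventually_mem hp).and
      (((wdz_contDiffAt (cf_contDiffAt hρp)).continuousAt.eventually_ne hz).and
        ((wdw_contDiffAt (cf_contDiffAt hρp)).continuousAt.eventually_ne hw))
  refine contDiffAt_of_eq_add_smul hρp (contDiffAt_supNormal hρp hz hw)
    (hρ.eq_zero_of_mem_frontier hpΩ hp) hnormal hQ (tendsto_sdist_of_mem_frontier hpΩ) ?_ ?_
  · filter_upwards [hQ.eventually (hρ.eventually_mem hp)] with x hx
    exact hρ.eq_zero_of_mem_frontier (hQx x).1 hx
  · filter_upwards [hQ.eventually hne] with x ⟨hV, hzx, hwx⟩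
    exact hρ.eq_add_sdist_smul_supNormal (hQx x).1 hV (hQx x).2 hzx hwx

theorem IsDefiningFunctionOn.isBigO_sdist (hρ : IsDefiningFunctionOn Ω ρ V)
    (hpΩ : p ∈ frontier Ω) (hp : p ∈ V) : ρ =O[𝓝 p] sdist Ω := by
  obtain ⟨Q, hQ, hQx⟩ := exists_tendsto_infDist_eq_dist isClosed_frontier hpΩ
  obtain ⟨C, U, hU, hlip⟩ := ((hρ.contDiffAt hp).of_le (m := 1) (by simp)).exists_lipschitzOnWith
  refine Asymptotics.IsBigO.of_bound C ?_
  filter_upwards [hU, hQ hU, hQ.eventually (hρ.eventually_mem hp)] with x hx hQU hQV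
  simpa [hρ.eq_zero_of_mem_frontier (hQx x).1 hQV, abs_sdist, (hQx x).2] using
    hlip.dist_le_mul x hx (Q x) hQU

theorem IsDefiningFunctionOn.exists_fderiv_sdist_eq_smul (hρ : IsDefiningFunctionOn Ω ρ V)
    (hpΩ : p ∈ frontier Ω) (hp : p ∈ V) (hd : DifferentiableAt ℝ (sdist Ω) p) :
    ∃ κ : ℝ, 0 < κ ∧ fderiv ℝ (sdist Ω) p = κ • fderiv ℝ ρ p := by
  have hρ0 := hρ.eq_zero_of_mem_frontier hpΩ hp
  have hδ0 := sdist_eq_zero_of_mem_frontier hpΩ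
  obtain ⟨κ, hκ, heq⟩ := exists_nonneg_fderiv_eq_smul hd (hρ.differentiableAt hp) hδ0 hρ0
    (hρ.fderiv_ne_zero p ⟨hpΩ, hp⟩) <| (hρ.eventually_mem hp).mono fun x hxV hx =>
      sdist_nonpos_of_mem ((hρ.mem_iff x hxV).2 hx)
  refine ⟨κ, hκ.lt_of_ne' ?_, heq⟩
  rintro rfl
  have hsmall : sdist Ω =o[𝓝 p] fun x => x - p := by
    simpa [hδ0, heq] using hd.hasFDerivAt.isLittleO
  refine hρ.fderiv_ne_zero p ⟨hpΩ, hp⟩ (HasFDerivAt.fderiv (.of_isLittleO ?_))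
  simpa [hρ0] using (hρ.isBigO_sdist hpΩ hp).trans_isLittleO hsmall

end SignedDistance

section Pseudoconvex

namespace IsDefiningFunctionOn

variable {Ω V : Set (ℂ × ℂ)} {ρ : ℂ × ℂ → ℝ} {p : ℂ × ℂ} (hρ : IsDefiningFunctionOn Ω ρ V)
  (hΩ : IsPseudoconvex Ω)

include hρ hΩ

theorem cHess_tangent_nonneg (hpΩ : p ∈ frontier Ω) (hp : p ∈ V) (hz : wdz (cf ρ) p ≠ 0)
    (hw : wdw (cf ρ) p ≠ 0) : 0 ≤ cHess ρ p (wdw (cf ρ) p) (-wdz (cf ρ) p) := by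
  have hδ := hρ.contDiffAt_sdist hpΩ hp hz hw
  have hδd : ∀ᶠ x in 𝓝 p, DifferentiableAt ℝ (sdist Ω) x :=
    eventually_differentiableAt (hδ.of_le (by simp))
  obtain ⟨κ, hκ, hp_eq⟩ := hρ.exists_fderiv_sdist_eq_smul hpΩ hp hδd.self_of_nhds
  have hprop : ∀ᶠ x in 𝓝 p, ρ x = ρ p →
      ∃ κ' : ℝ, fderiv ℝ (sdist Ω) x = κ' • fderiv ℝ ρ x := by
    filter_upwards [hδd, hρ.eventually_mem hp, hρ.eventually_mem_frontier hpΩ hp]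
      with x hx hxV hxΩ hρx
    obtain ⟨κ', -, heq⟩ := hρ.exists_fderiv_sdist_eq_smul
      (hxΩ (hρx.trans (hρ.eq_zero_of_mem_frontier hpΩ hp))) hxV hx
    exact ⟨κ', heq⟩
  have hs := fderiv_cf_eq_smul hδd.self_of_nhds (hρ.differentiableAt hp) hp_eq
  have htangent : IsComplexTangent Ω p (wdw (cf ρ) p) (-wdz (cf ρ) p) := by
    rw [IsComplexTangent, wdz_eq_mul_of_fderiv_eq_smul hs, wdw_eq_mul_of_fderiv_eq_smul hs]
    ring
  have hlevi := hΩ p hpΩ _ _ htangent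
  rw [cHess_tangent_eq_mul hδ (hρ.contDiffAt hp) (hρ.fderiv_ne_zero p ⟨hpΩ, hp⟩) hp_eq hprop]
    at hlevi
  exact (mul_nonneg_iff_of_pos_left hκ).1 hlevi

theorem re_wdw_wdwbar_nonneg (hz : ∀ q ∈ frontier Ω ∩ V, wdz (cf ρ) q ≠ 0)
    (hflat : ∀ q ∈ frontier Ω ∩ V, ∀ ξ η : ℂ,
      cHess ρ q ξ η = normSq η * (wdw (wdwbar (cf ρ)) q).re)
    (hpΩ : p ∈ frontier Ω) (hp : p ∈ V) : 0 ≤ (wdw (wdwbar (cf ρ)) p).re := by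
  have hF := wdwbar_contDiffAt (cf_contDiffAt (hρ.contDiffAt hp))
  by_cases hfreq : ∃ᶠ x in 𝓝[frontier Ω] p, wdw (cf ρ) x ≠ 0
  · have hlim : Tendsto (fun x => (wdw (wdwbar (cf ρ)) x).re) (𝓝[frontier Ω] p)
        (𝓝 (wdw (wdwbar (cf ρ)) p).re) :=
      (continuous_re.continuousAt.comp (wdw_contDiffAt hF).continuousAt).mono_left
        nhdsWithin_le_nhds
    refine ge_of_tendsto_of_frequently hlim ?_
    refine (hfreq.and_eventually (((hρ.eventually_mem hp).filter_mono nhdsWithin_le_nhds).and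
      self_mem_nhdsWithin)).mono fun x ⟨hwx, hxV, hxΩ⟩ => ?_
    have hzx := hz x ⟨hxΩ, hxV⟩
    have hnonneg := hρ.cHess_tangent_nonneg hΩ hxΩ hxV hzx hwx
    rw [hflat x ⟨hxΩ, hxV⟩] at hnonneg
    exact (mul_nonneg_iff_of_pos_left (normSq_pos.2 (neg_ne_zero.2 hzx))).1 hnonneg
  · have hw : ∀ᶠ x in 𝓝 p, x ∈ frontier Ω → wdw (cf ρ) x = 0 := by
      simpa [eventually_nhdsWithin_iff] using hfreq
    have hvanish : ∀ᶠ x in 𝓝 p, ρ x = ρ p → wdwbar (cf ρ) x = 0 := by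
      filter_upwards [hw, hρ.eventually_mem hp, hρ.eventually_mem_frontier hpΩ hp]
        with x hwx hxV hxΩ hρx
      rw [wdwbar_cf_eq_conj (hρ.differentiableAt hxV),
        hwx (hxΩ (hρx.trans (hρ.eq_zero_of_mem_frontier hpΩ hp))), map_zero]
    have heq := wdw_mul_wdz_eq_wdz_mul_wdw_of_eq_zero_on_levelSet (hF.of_le (by simp))
      ((hρ.contDiffAt hp).of_le (by simp)) (hρ.fderiv_ne_zero p ⟨hpΩ, hp⟩) hvanish
    rw [hw.self_of_nhds hpΩ, zero_mul, zero_eq_mul] at heq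
    simp [heq.resolve_left (hz p ⟨hpΩ, hp⟩)]

end IsDefiningFunctionOn

end Pseudoconvex

section Rotation

/-- The rotation `(z, w) ↦ (c z, w)` by a unit complex number `c`. -/
def rotateFst (c : Circle) : (ℂ × ℂ) ≃L[ℝ] (ℂ × ℂ) :=
  (rotation c).toContinuousLinearEquiv.prodCongr (.refl ℝ ℂ)

theorem rotateFst_apply (c : Circle) (p : ℂ × ℂ) : rotateFst c p = (c * p.1, p.2) := rfl

theorem isometry_rotateFst (c : Circle) : Isometry (rotateFst c) :=
  (rotation c).isometry.prodMap isometry_id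

theorem exists_rotateFst_eq_norm (p : ℂ × ℂ) : ∃ c, rotateFst c p = ((‖p.1‖ : ℂ), p.2) := by
  refine ⟨Circle.exp (-arg p.1), Prod.ext ?_ rfl⟩
  rw [rotateFst_apply, Circle.coe_exp]
  nth_rw 2 [← norm_mul_exp_arg_mul_I p.1]
  rw [mul_left_comm, ← Complex.exp_add]
  simp

theorem IsHartogs.preimage_rotateFst {Ω : Set (ℂ × ℂ)} (hΩ : IsHartogs Ω) (c : Circle) :
    rotateFst c ⁻¹' Ω = Ω := by
  have hmem (c : Circle) {p : ℂ × ℂ} (hp : p ∈ Ω) : rotateFst c p ∈ Ω := by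
    obtain ⟨θ, rfl⟩ := Circle.exp_surjective c
    exact hΩ p.1 p.2 θ hp
  refine Subset.antisymm (fun p hp => ?_) fun p hp => hmem c hp
  simpa [rotateFst_apply] using hmem c⁻¹ hp

theorem IsHartogs.preimage_rotateFst_frontier {Ω : Set (ℂ × ℂ)} (hΩ : IsHartogs Ω) (c : Circle) :
    rotateFst c ⁻¹' frontier Ω = frontier Ω := by
  rw [← ContinuousLinearEquiv.coe_toHomeomorph, Homeomorph.preimage_frontier,
    ContinuousLinearEquiv.coe_toHomeomorph, hΩ.preimage_rotateFst]

/-- Invariance of a function on `ℂ²` under all rotations of the first variable. -/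
def IsRotationInvariant (f : ℂ × ℂ → ℝ) : Prop :=
  ∀ c p, f (rotateFst c p) = f p

theorem IsHartogs.isRotationInvariant_sdist {Ω : Set (ℂ × ℂ)} (hΩ : IsHartogs Ω) :
    IsRotationInvariant (sdist Ω) := by
  intro c p
  have hmem : rotateFst c p ∈ Ω ↔ p ∈ Ω := by rw [← mem_preimage, hΩ.preimage_rotateFst]
  have hdist : infDist (rotateFst c p) (frontier Ω) = infDist p (frontier Ω) := by
    conv_lhs => rw [← image_preimage_eq (frontier Ω) (rotateFst c).surjective]
    rw [infDist_image (isometry_rotateFst c), hΩ.preimage_rotateFst_frontier]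
  simp only [sdist, hmem, hdist]

/-- The radial field `r ∂/∂r` in the first variable. -/
def radialField (p : ℂ × ℂ) : ℂ × ℂ := (p.1, 0)

theorem contDiff_radialField : ContDiff ℝ ∞ radialField :=
  contDiff_fst.prodMk contDiff_const

namespace IsRotationInvariant

variable {f : ℂ × ℂ → ℝ} {p : ℂ × ℂ} (hf : IsRotationInvariant f)

include hf

theorem fderiv_rotateFst (c : Circle) (p v : ℂ × ℂ) :
    fderiv ℝ f (rotateFst c p) (rotateFst c v) = fderiv ℝ f p v := by
  conv_rhs => rw [← show f ∘ rotateFst c = f from funext (hf c),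
    ContinuousLinearEquiv.comp_right_fderiv]
  rfl

theorem derivAlong_radialField : IsRotationInvariant (derivAlong radialField f) := by
  intro c p
  rw [derivAlong, derivAlong, ← hf.fderiv_rotateFst c p]
  simp [radialField, rotateFst_apply]

theorem normalizeAlong_radialField : IsRotationInvariant (normalizeAlong radialField f) := by
  intro c p
  have hf₁ := hf.derivAlong_radialField
  simp only [normalizeAlong, hf c p, hf₁ c p, hf₁.derivAlong_radialField c p]

theorem fderiv_I_mul_fst (hd : DifferentiableAt ℝ f p) : fderiv ℝ f p (I * p.1, 0) = 0 := by
  have hcurve : HasDerivAt (fun t : ℝ => rotateFst (Circle.exp t) p) (I * p.1, 0) 0 := by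
    have hexp : HasDerivAt (fun t : ℝ => Complex.exp (t * I)) I 0 := by
      simpa using ((hasDerivAt_id (0 : ℝ)).ofReal_comp.mul_const I).cexp
    simpa only [rotateFst_apply, Circle.coe_exp] using
      (hexp.mul_const p.1).prodMk (hasDerivAt_const (0 : ℝ) p.2)
  have hcomp := hd.hasFDerivAt.comp_hasDerivAt_of_eq (0 : ℝ) hcurve (by simp [rotateFst_apply])
  simp only [Function.comp_def, hf _ p] at hcomp
  exact hcomp.unique (hasDerivAt_const 0 (f p))

theorem two_mul_fst_mul_wdz (hd : DifferentiableAt ℝ f p) :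
    2 * p.1 * wdz (cf f) p = derivAlong radialField f p := by
  have hre := fderiv_apply_eq_two_mul_re hd (radialField p)
  have him := fderiv_apply_eq_two_mul_re hd (I * p.1, 0)
  rw [hf.fderiv_I_mul_fst hd] at him
  apply Complex.ext
  · rw [derivAlong, hre]
    simp only [radialField, mul_zero, add_zero, mul_re, mul_im, re_ofNat, im_ofNat, ofReal_re]
    ring
  · simp only [mul_zero, add_zero, mul_re, mul_im, I_re, I_im, re_ofNat, im_ofNat, ofReal_im]
      at him ⊢
    linarith

theorem two_mul_conj_fst_mul_wdzbar (hd : DifferentiableAt ℝ f p) :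
    2 * (starRingEnd ℂ) p.1 * wdzbar (cf f) p = derivAlong radialField f p := by
  rw [wdzbar_cf_eq_conj hd, ← conj_ofReal, ← hf.two_mul_fst_mul_wdz hd, map_mul, map_mul,
    map_ofNat]

theorem derivAlong_radialField_ne_zero (hz : wdz (cf f) p ≠ 0) :
    derivAlong radialField f p ≠ 0 := by
  have hd := differentiableAt_of_wdz_cf_ne_zero hz
  have hp : p.1 ≠ 0 := by
    intro hp
    have hfix : rotateFst (-1) p = p := Prod.ext (by simp [rotateFst_apply, hp]) rfl
    have hodd (v : ℂ) : fderiv ℝ f p (v, 0) = 0 := by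
      have hrot := hf.fderiv_rotateFst (-1) p (v, 0)
      have hneg : rotateFst (-1) (v, 0) = -(v, 0) := by simp [rotateFst_apply]
      rw [hfix, hneg, map_neg] at hrot
      linarith
    exact hz (by simp [wdz, fderiv_cf_apply hd, hodd])
  have hprod : 2 * p.1 * wdz (cf f) p ≠ 0 := mul_ne_zero (mul_ne_zero two_ne_zero hp) hz
  rw [hf.two_mul_fst_mul_wdz hd] at hprod
  exact ofReal_ne_zero.1 hprod

theorem wdz_ne_zero_of_derivAlong_radialField_ne_zero (hd : DifferentiableAt ℝ f p)
    (h : derivAlong radialField f p ≠ 0) : wdz (cf f) p ≠ 0 := by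
  intro hz
  have := hf.two_mul_fst_mul_wdz hd
  rw [hz, mul_zero, eq_comm, ofReal_eq_zero] at this
  exact h this

/- Near `p`, `2 z̄ f_z̄` is the radial derivative of `f`, and `z̄` is antiholomorphic. -/
theorem wdz_wdzbar_eq_zero_and_wdw_wdzbar_eq_zero (hp : p.1 ≠ 0) (hsm : ContDiffAt ℝ ∞ f p)
    (hflat : fderiv ℝ (derivAlong radialField f) p = 0) :
    wdz (wdzbar (cf f)) p = 0 ∧ wdw (wdzbar (cf f)) p = 0 := by
  let G : ℂ × ℂ →L[ℝ] ℂ := (2 : ℝ) • (conjCLE : ℂ →L[ℝ] ℂ) ∘L .fst ℝ ℂ ℂ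
  have hG0 : G p ≠ 0 := by simpa [G] using hp
  have hGz : wdz G p = 0 := by
    simp only [wdz, G.fderiv]
    simp [G, mul_left_comm I]
  have hGw : wdw G p = 0 := by
    simp only [wdw, G.fderiv]
    simp [G]
  have hF : DifferentiableAt ℝ (wdzbar (cf f)) p :=
    (wdzbar_contDiffAt (cf_contDiffAt hsm)).differentiableAt (by simp)
  have heq : ⇑G * wdzbar (cf f) =ᶠ[𝓝 p] cf (derivAlong radialField f) := by
    filter_upwards [eventually_differentiableAt (hsm.of_le (m := 1) (by simp))] with x hx
    simpa [G, cf, mul_assoc] using hf.two_mul_conj_fst_mul_wdzbar hx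
  have hzero : fderiv ℝ (⇑G * wdzbar (cf f)) p = 0 := by
    rw [heq.fderiv_eq, fderiv_cf ((contDiffAt_derivAlong contDiff_radialField hsm).differentiableAt
      (by simp)), hflat, ContinuousLinearMap.comp_zero]
  have hz : wdz (⇑G * wdzbar (cf f)) p = 0 := by simp [wdz, hzero]
  have hw : wdw (⇑G * wdzbar (cf f)) p = 0 := by simp [wdw, hzero]
  rw [wdz_mul G.differentiableAt hF, hGz, mul_zero, add_zero] at hz
  rw [wdw_mul G.differentiableAt hF, hGw, mul_zero, add_zero] at hw
  exact ⟨(mul_eq_zero.1 hz).resolve_left hG0, (mul_eq_zero.1 hw).resolve_left hG0⟩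

theorem cHess_eq_normSq_mul_re (hp : p.1 ≠ 0) (hsm : ContDiffAt ℝ ∞ f p)
    (hflat : fderiv ℝ (derivAlong radialField f) p = 0) (ξ η : ℂ) :
    cHess f p ξ η = normSq η * (wdw (wdwbar (cf f)) p).re := by
  obtain ⟨hzz, hwz⟩ := hf.wdz_wdzbar_eq_zero_and_wdw_wdzbar_eq_zero hp hsm hflat
  rw [cHess, hzz, wdz_wdwbar_eq_conj_wdw_wdzbar (hsm.of_le ENat.LEInfty.out), hwz,
    map_zero]
  simp only [zero_mul, zero_add, mul_assoc, mul_conj]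
  rw [re_mul_ofReal, mul_comm]

end IsRotationInvariant

end Rotation

section Radialization

/-- The function `r (|z|, w)`; it agrees with `r` on the points with `z ≥ 0` and is invariant under
rotations of the first variable. -/
def radialization (r : ℂ × ℂ → ℝ) (p : ℂ × ℂ) : ℝ := r ((‖p.1‖ : ℂ), p.2)

variable {Ω : Set (ℂ × ℂ)} {r : ℂ × ℂ → ℝ} {p : ℂ × ℂ}

theorem isRotationInvariant_radialization (r : ℂ × ℂ → ℝ) :
    IsRotationInvariant (radialization r) := fun c p => by
  simp [radialization, rotateFst_apply, Circle.norm_coe]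

theorem contDiffAt_radialization (hr : ContDiff ℝ ∞ r) (hp : p.1 ≠ 0) :
    ContDiffAt ℝ ∞ (radialization r) p :=
  hr.contDiffAt.comp p
    ((ofRealCLM.contDiff.contDiffAt.comp p (contDiffAt_fst.norm ℝ hp)).prodMk contDiffAt_snd)

theorem derivAlong_radialField_radialization (hr : ContDiff ℝ ∞ r) (hp : p.1 ≠ 0) :
    derivAlong radialField (radialization r) p =
      derivAlong radialField r ((‖p.1‖ : ℂ), p.2) := by
  have hr' := hasDerivAt_derivAlong radialField
    (hr.contDiffAt.differentiableAt (x := ((‖p.1‖ : ℂ), p.2)) (by simp))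
  refine (hasDerivAt_derivAlong radialField
    ((contDiffAt_radialization hr hp).differentiableAt (by simp))).unique
      (hr'.congr_of_eventuallyEq ?_)
  filter_upwards [eventually_gt_nhds (show (-1 : ℝ) < 0 by simp)] with t ht
  have hscale : ‖p.1 + t * p.1‖ = ‖p.1‖ + t * ‖p.1‖ := by
    rw [← one_add_mul, ← ofReal_one, ← ofReal_add, norm_mul, norm_real,
      Real.norm_of_nonneg (by linarith), one_add_mul]
  simp [radialization, radialField, hscale]

theorem IsDefiningFunction.radialization_neg_iff (hr : IsDefiningFunction Ω r) (hΩ : IsHartogs Ω)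
    (p : ℂ × ℂ) : radialization r p < 0 ↔ p ∈ Ω := by
  obtain ⟨c, hc⟩ := exists_rotateFst_eq_norm p
  rw [radialization, ← hr.2.1, ← hc, ← mem_preimage, hΩ.preimage_rotateFst]

theorem IsDefiningFunction.isDefiningFunctionOn_radialization (hr : IsDefiningFunction Ω r)
    (hΩ : IsHartogs Ω) : IsDefiningFunctionOn Ω (radialization r)
      {p | p.1 ≠ 0 ∧ derivAlong radialField (radialization r) p ≠ 0} where
  isOpen := isOpen_iff_mem_nhds.2 fun _ hp =>
    (continuousAt_fst.eventually_ne hp.1).and ((contDiffAt_derivAlong contDiff_radialField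
      (contDiffAt_radialization hr.1 hp.1)).continuousAt.eventually_ne hp.2)
  contDiffOn _ hp := (contDiffAt_radialization hr.1 hp.1).contDiffWithinAt
  mem_iff p _ := (hr.radialization_neg_iff hΩ p).symm
  fderiv_ne_zero p hp h0 := hp.2.2 (by simp [derivAlong, h0])

theorem IsDefiningFunction.fst_ne_zero_and_derivAlong_radialization_ne_zero
    (hr : IsDefiningFunction Ω r) (hΩ : IsHartogs Ω) (hp : p ∈ frontier Ω)
    (hz : wdz (cf (sdist Ω)) p ≠ 0) :
    p.1 ≠ 0 ∧ derivAlong radialField (radialization r) p ≠ 0 := by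
  have hδ := hΩ.isRotationInvariant_sdist
  have hδp := hδ.derivAlong_radialField_ne_zero hz
  have hp1 : p.1 ≠ 0 := fun h1 => hδp (by
    rw [derivAlong, radialField, h1, Prod.mk_zero_zero, map_zero])
  obtain ⟨c, hc⟩ := exists_rotateFst_eq_norm p
  have hcΩ : rotateFst c p ∈ frontier Ω := by
    rwa [← mem_preimage, hΩ.preimage_rotateFst_frontier]
  have hδc : derivAlong radialField (sdist Ω) (rotateFst c p) ≠ 0 := by
    rwa [hδ.derivAlong_radialField c p]
  have hdiff : DifferentiableAt ℝ (sdist Ω) (rotateFst c p) := by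
    by_contra h
    exact hδc (by simp [derivAlong, fderiv_zero_of_not_differentiableAt h])
  obtain ⟨κ, -, hκ⟩ := hr.isDefiningFunctionOn_univ.exists_fderiv_sdist_eq_smul hcΩ
    (mem_univ _) hdiff
  refine ⟨hp1, fun h0 => hδc ?_⟩
  rw [derivAlong_radialField_radialization hr.1 hp1, ← hc, derivAlong] at h0
  rw [derivAlong, hκ, smul_apply, h0, smul_zero]

end Radialization

section NormalizedDefiningFunction

variable {Ω U : Set (ℂ × ℂ)} {X : ℂ × ℂ → ℂ × ℂ} {R : ℂ × ℂ → ℝ} {p : ℂ × ℂ}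

namespace IsDefiningFunctionOn

variable (hR : IsDefiningFunctionOn Ω R U)

include hR

theorem mem_normalizationDomain (hpΩ : p ∈ frontier Ω) (hp : p ∈ U) :
    p ∈ normalizationDomain X R U :=
  ⟨hp, by simp [hR.eq_zero_of_mem_frontier hpΩ hp]⟩

variable (hX : ContDiff ℝ ∞ X) (hXR : ∀ p ∈ U, derivAlong X R p ≠ 0)

include hX hXR

theorem isOpen_normalizationDomain : IsOpen (normalizationDomain X R U) := by
  refine isOpen_iff_mem_nhds.2 fun p hp => ?_
  have h0 := hR.contDiffAt hp.1
  have h1 := contDiffAt_derivAlong hX h0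
  have h2 := contDiffAt_derivAlong hX h1
  have hcont := (contDiffAt_const (c := (1 : ℝ)).add ((h0.mul h2).div
    (contDiffAt_const.mul (h1.pow 2)) (mul_ne_zero two_ne_zero (pow_ne_zero 2 (hXR p hp.1)))))
      |>.continuousAt
  exact (hR.eventually_mem hp.1).and (hcont.eventually_const_lt hp.2)

theorem isDefiningFunctionOn_normalizeAlong :
    IsDefiningFunctionOn Ω (normalizeAlong X R) (normalizationDomain X R U) where
  isOpen := hR.isOpen_normalizationDomain hX hXR
  contDiffOn p hp :=
    (contDiffAt_normalizeAlong hX (hR.contDiffAt hp.1) (hXR p hp.1)).contDiffWithinAt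
  mem_iff p hp := (hR.mem_iff p hp.1).trans (normalizeAlong_neg_iff (hXR p hp.1) hp.2).symm
  fderiv_ne_zero p hp h0 :=
    derivAlong_normalizeAlong_ne_zero hX (hR.contDiffAt hp.2.1) (hXR p hp.2.1)
      (hR.eq_zero_of_mem_frontier hp.1 hp.2.1) (by simp [derivAlong, h0])

end IsDefiningFunctionOn

theorem IsDefiningFunctionOn.cHess_normalizeAlong_radialField_nonneg
    (hR : IsDefiningFunctionOn Ω R U) (hrot : IsRotationInvariant R) (hU : ∀ p ∈ U, p.1 ≠ 0)
    (hXR : ∀ p ∈ U, derivAlong radialField R p ≠ 0) (hΩ : IsPseudoconvex Ω)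
    (hp : p ∈ frontier Ω ∩ normalizationDomain radialField R U) (ξ η : ℂ) :
    0 ≤ cHess (normalizeAlong radialField R) p ξ η := by
  have hρ := hR.isDefiningFunctionOn_normalizeAlong contDiff_radialField hXR
  have hflat : ∀ q ∈ frontier Ω ∩ normalizationDomain radialField R U, ∀ ξ η : ℂ,
      cHess (normalizeAlong radialField R) q ξ η =
        normSq η * (wdw (wdwbar (cf (normalizeAlong radialField R))) q).re := fun q hq =>
    hrot.normalizeAlong_radialField.cHess_eq_normSq_mul_re (hU q hq.2.1) (hρ.contDiffAt hq.2)
      (fderiv_derivAlong_normalizeAlong_eq_zero contDiff_radialField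
        ((hR.eventually_mem hq.2.1).mono fun _ => hR.contDiffAt) (hXR q hq.2.1)
        (hR.eq_zero_of_mem_frontier hq.1 hq.2.1))
  have hz : ∀ q ∈ frontier Ω ∩ normalizationDomain radialField R U,
      wdz (cf (normalizeAlong radialField R)) q ≠ 0 := fun q hq =>
    hrot.normalizeAlong_radialField.wdz_ne_zero_of_derivAlong_radialField_ne_zero
      (hρ.differentiableAt hq.2) (derivAlong_normalizeAlong_ne_zero contDiff_radialField
        (hR.contDiffAt hq.2.1) (hXR q hq.2.1) (hR.eq_zero_of_mem_frontier hq.1 hq.2.1))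
  rw [hflat p hp]
  exact mul_nonneg (normSq_nonneg η) (hρ.re_wdw_wdwbar_nonneg hΩ hz hflat hp.1 hp.2)

end NormalizedDefiningFunction

theorem stmt_9_general (Ω : Set (ℂ × ℂ)) (hH : IsHartogs Ω) (hsm : HasSmoothBoundary Ω)
    (hpsc : IsPseudoconvex Ω) (K : Set (ℂ × ℂ)) (hKsub : K ⊆ frontier Ω)
    (hKz : ∀ p ∈ K, wdz (cf (sdist Ω)) p ≠ 0) :
    ∃ (V : Set (ℂ × ℂ)) (ρ : ℂ × ℂ → ℝ), IsOpen V ∧ K ⊆ V ∧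
      ContDiffOn ℝ (⊤ : ℕ∞) ρ V ∧ (∀ p ∈ V, p ∈ Ω ↔ ρ p < 0) ∧
      (∀ p ∈ frontier Ω ∩ V, fderiv ℝ ρ p ≠ 0) ∧
      ∀ p ∈ frontier Ω ∩ V, ∀ ξ η : ℂ, 0 ≤ cHess ρ p ξ η := by
  obtain ⟨r, hr⟩ := hsm
  have hR := hr.isDefiningFunctionOn_radialization hH
  have hρ := hR.isDefiningFunctionOn_normalizeAlong contDiff_radialField fun _ hp => hp.2
  have hKV p (hp : p ∈ K) := hR.mem_normalizationDomain (X := radialField) (hKsub hp)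
    (hr.fst_ne_zero_and_derivAlong_radialization_ne_zero hH (hKsub hp) (hKz p hp))
  refine ⟨_, _, hρ.isOpen, hKV, hρ.contDiffOn, hρ.mem_iff, hρ.fderiv_ne_zero, fun p hp => ?_⟩
  exact hR.cHess_normalizeAlong_radialField_nonneg (isRotationInvariant_radialization r)
    (fun _ hp => hp.1) (fun _ hp => hp.2) hpsc hp

/-- Lemma 3.2 of Abdulsahib–Harrington: near a compact set of boundary
points where `∂δ̃/∂z ≠ 0`, there is a local defining function which is plurisubharmonic
on the boundary. -/
theorem stmt_9 (Ω : Set (ℂ × ℂ)) (hopen : IsOpen Ω) (hconn : IsConnected Ω)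
    (hbdd : Bornology.IsBounded Ω) (hH : IsHartogs Ω) (hsm : HasSmoothBoundary Ω)
    (hpsc : IsPseudoconvex Ω) (K : Set (ℂ × ℂ)) (hKsub : K ⊆ frontier Ω)
    (hKcomp : IsCompact K) (hKz : ∀ p ∈ K, wdz (cf (sdist Ω)) p ≠ 0) :
    ∃ (V : Set (ℂ × ℂ)) (ρ : ℂ × ℂ → ℝ), IsOpen V ∧ K ⊆ V ∧
      ContDiffOn ℝ (⊤ : ℕ∞) ρ V ∧ (∀ p ∈ V, p ∈ Ω ↔ ρ p < 0) ∧
      (∀ p ∈ frontier Ω ∩ V, fderiv ℝ ρ p ≠ 0) ∧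
      ∀ p ∈ frontier Ω ∩ V, ∀ ξ η : ℂ, 0 ≤ cHess ρ p ξ η :=
  stmt_9_general Ω hH hsm hpsc K hKsub hKz

end
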